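/- arXiv:1410.5143 — 2 statements merged into one kernel-verified Lean document; each statement's English description precedes it below -/
import Mathlib

section
/- Let T = [[X, Y], [0, Z]] be an n×n complex block upper triangular matrix with X of size r×r and Z of size (n−r)×(n−r). Then det(I_n + T*T) = det(I_r + conj(X)·X) · det(I_{n−r} + conj(Z)·Z) if and only if Y = 0 and both X and Z are symmetric matrices. -/
/-! All determinants are compared in absolute value, through one monotonicity fact: if `M` and `S` are
positive semidefinite and `M + S` is positive definite, then `|det M| ≤ |det (M + S)|`, with
equality only for `S = 0` (`norm_det_le_norm_det_add`). It is applied to two Schur complements.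

* For `W`, `X` of the same shape, put `P = 1 + Wᴴ W`, `N = 1 + Wᴴ X`, `Q = 1 + Xᴴ X`. Then
  `Q = Nᴴ P⁻¹ N + (X - W)ᴴ (1 + W Wᴴ)⁻¹ (X - W)`, hence `|det N|² ≤ |det P| |det Q|`, with equality
  only for `X = W`. For `W = Xᵀ` this gives `|det (1 + conj X * X)| ≤ |det (1 + Xᴴ X)|`, with
  equality only for symmetric `X`.
* Taking the Schur complement of `1 + Xᴴ X` in `1 + Tᴴ T` gives
  `det (1 + Tᴴ T) = det (1 + Xᴴ X) * det (1 + Zᴴ Z + Yᴴ (1 + X Xᴴ)⁻¹ Y)`, whose absolute value is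
  at least `|det (1 + Xᴴ X)| |det (1 + Zᴴ Z)|`, with equality only for `Y = 0`.

The assumed identity forces equality in all of these estimates.
-/

open Matrix

open scoped ComplexOrder MatrixOrder

section Aux

variable {m n : Type*} [Fintype m] [Fintype n] [DecidableEq m] [DecidableEq n]

lemma one_add_sum_le_prod {ι : Type*} (s : Finset ι) (f : ι → ℝ) (hf : ∀ i, 0 ≤ f i) :
    1 + ∑ i ∈ s, f i ≤ ∏ i ∈ s, (1 + f i) := by
  classical
  induction s using Finset.induction_on with
  | empty => simp
  | insert a s ha ih =>
    rw [Finset.sum_insert ha, Finset.prod_insert ha]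
    nlinarith [mul_le_mul_of_nonneg_left ih (add_nonneg zero_le_one (hf a)),
      mul_nonneg (hf a) (Finset.sum_nonneg fun i (_ : i ∈ s) => hf i)]

lemma det_one_add_eq_prod {S : Matrix n n ℂ} (hS : S.IsHermitian) :
    (1 + S).det = ∏ i, (1 + (hS.eigenvalues i : ℂ)) := by
  conv_lhs => rw [hS.spectral_theorem, Unitary.conjStarAlgAut_apply, mul_assoc,
    det_one_add_mul_comm, mul_assoc, Unitary.coe_star_mul_self, mul_one, ← diagonal_one,
    diagonal_add, det_diagonal]
  simp

lemma one_add_re_trace_le {S : Matrix n n ℂ} (hS : S.PosSemidef) :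
    1 + S.trace.re ≤ ‖(1 + S).det‖ := by
  have h0 := hS.eigenvalues_nonneg
  have h1 : ‖(1 + S).det‖ = ∏ i, (1 + hS.1.eigenvalues i) := by
    rw [det_one_add_eq_prod hS.1, norm_prod]
    refine Finset.prod_congr rfl fun i _ => ?_
    rw [← Complex.ofReal_one, ← Complex.ofReal_add, Complex.norm_real, Real.norm_of_nonneg]
    linarith [h0 i]
  rw [h1, hS.1.trace_eq_sum_eigenvalues]
  simpa using one_add_sum_le_prod Finset.univ hS.1.eigenvalues h0

/-- The determinant is monotone on positive semidefinite matrices, strictly below a positive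
definite one. -/
lemma norm_det_le_norm_det_add {M S : Matrix n n ℂ} (hM : M.PosSemidef) (hS : S.PosSemidef)
    (hMS : (M + S).PosDef) :
    ‖M.det‖ ≤ ‖(M + S).det‖ ∧ (‖M.det‖ = ‖(M + S).det‖ → S = 0) := by
  have hpos : 0 < ‖(M + S).det‖ := norm_pos_iff.2 hMS.det_pos.ne'
  by_cases hd : M.det = 0
  · rw [hd, norm_zero]
    exact ⟨hpos.le, fun h => absurd h hpos.ne⟩
  have hMp : M.PosDef := hM.posDef_iff_det_ne_zero.2 hd
  have hu : IsUnit M.det := isUnit_iff_ne_zero.2 hd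
  obtain ⟨C, hC⟩ := CStarAlgebra.nonneg_iff_eq_star_mul_self.mp hMp.inv.posSemidef.nonneg
  rw [star_eq_conjTranspose] at hC
  -- With `M⁻¹ = Cᴴ C`, the sum `M + S` has determinant `det M * det (1 + C S Cᴴ)`.
  have hS' : (C * S * Cᴴ).PosSemidef := hS.mul_mul_conjTranspose_same C
  have hdet : (M + S).det = M.det * (1 + C * S * Cᴴ).det := by
    have : M + S = M * (1 + Cᴴ * (C * S)) := by
      rw [← mul_assoc, ← hC, mul_add, mul_one, ← mul_assoc, mul_nonsing_inv _ hu, one_mul]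
    rw [this, det_mul, det_one_add_mul_comm]
  have htr := one_add_re_trace_le hS'
  have h0 := Complex.le_def.1 hS'.trace_nonneg
  have hMn : 0 < ‖M.det‖ := norm_pos_iff.2 hd
  rw [hdet, norm_mul]
  simp only [Complex.zero_re, Complex.zero_im] at h0
  refine ⟨by nlinarith, fun h => ?_⟩
  have h1 : ‖(1 + C * S * Cᴴ).det‖ = 1 := by
    apply mul_left_cancel₀ hMn.ne'
    rw [← h, mul_one]
  have h2 : (C * S * Cᴴ).trace = 0 := Complex.ext (by simp; linarith) (by simpa using h0.2.symm)
  have h3 : C * S * Cᴴ = 0 := hS'.trace_eq_zero_iff.1 h2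
  calc S = M * M⁻¹ * S * (M⁻¹ * M) := by
        rw [mul_nonsing_inv _ hu, nonsing_inv_mul _ hu, one_mul, mul_one]
    _ = M * Cᴴ * (C * S * Cᴴ) * C * M := by rw [hC]; simp only [mul_assoc]
    _ = 0 := by rw [h3]; simp

omit [DecidableEq m] in
lemma posDef_one_add (W : Matrix m n ℂ) : (1 + Wᴴ * W).PosDef :=
  PosDef.one.add_posSemidef (posSemidef_conjTranspose_mul_self W)

omit [DecidableEq n] in
lemma posDef_one_add' (W : Matrix m n ℂ) : (1 + W * Wᴴ).PosDef :=
  PosDef.one.add_posSemidef (posSemidef_self_mul_conjTranspose W)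

/-- The Woodbury identity for `1 + W Wᴴ`. -/
lemma inv_one_add (W : Matrix m n ℂ) :
    (1 + W * Wᴴ)⁻¹ = 1 - W * (1 + Wᴴ * W)⁻¹ * Wᴴ := by
  apply inv_eq_left_inv
  have hu := (isUnit_iff_isUnit_det _).1 (posDef_one_add W).isUnit
  have h : Wᴴ * (1 + W * Wᴴ) = (1 + Wᴴ * W) * Wᴴ := by
    simp only [Matrix.mul_add, Matrix.add_mul, Matrix.mul_one, Matrix.one_mul, Matrix.mul_assoc]
  rw [Matrix.sub_mul, Matrix.mul_assoc _ Wᴴ, h, Matrix.mul_assoc W,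
    nonsing_inv_mul_cancel_left _ _ hu]
  simp

omit [Fintype n] [DecidableEq n] in
lemma conj_eq_zero {R : Matrix m m ℂ} (hR : R.PosDef) {D : Matrix m n ℂ}
    (h : Dᴴ * R * D = 0) : D = 0 := by
  obtain ⟨C, hC⟩ := CStarAlgebra.nonneg_iff_eq_star_mul_self.mp hR.posSemidef.nonneg
  rw [star_eq_conjTranspose] at hC
  have h1 : (C * D)ᴴ * (C * D) = 0 := by
    rw [← h, hC, conjTranspose_mul]; simp only [Matrix.mul_assoc]
  have h2 : C * D = 0 := conjTranspose_mul_self_eq_zero.1 h1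
  have hu := (isUnit_iff_isUnit_det _).1 hR.isUnit
  rw [← nonsing_inv_mul_cancel_left R D hu, hC, Matrix.mul_assoc Cᴴ, h2]
  simp

/-- The Schur complement of `1 + Wᴴ W` in the Gram matrix of the stacked blocks `[1; W]`, `[1; X]`
is `(X - W)ᴴ (1 + W Wᴴ)⁻¹ (X - W)`. -/
lemma gram_decomp (W X : Matrix m n ℂ) :
    1 + Xᴴ * X = (1 + Wᴴ * X)ᴴ * (1 + Wᴴ * W)⁻¹ * (1 + Wᴴ * X) +
      (X - W)ᴴ * (1 + W * Wᴴ)⁻¹ * (X - W) := by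
  have hu := (isUnit_iff_isUnit_det _).1 (posDef_one_add W).isUnit
  obtain ⟨D, rfl⟩ : ∃ D, X = W + D := ⟨X - W, by simp⟩
  rw [inv_one_add, add_sub_cancel_left]
  have hN : 1 + Wᴴ * (W + D) = (1 + Wᴴ * W) + Wᴴ * D := by rw [Matrix.mul_add, add_assoc]
  have hP : (1 + Wᴴ * W)ᴴ = 1 + Wᴴ * W := (posDef_one_add W).1
  rw [hN, conjTranspose_add (1 + Wᴴ * W), hP, Matrix.add_mul _ _ (1 + Wᴴ * W)⁻¹, mul_nonsing_inv _ hu]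
  have e : (1 + (Wᴴ * D)ᴴ * (1 + Wᴴ * W)⁻¹) * (1 + Wᴴ * W + Wᴴ * D) =
      (1 + Wᴴ * W) + Wᴴ * D + (Wᴴ * D)ᴴ + (Wᴴ * D)ᴴ * (1 + Wᴴ * W)⁻¹ * (Wᴴ * D) := by
    rw [Matrix.add_mul, Matrix.one_mul, Matrix.mul_add, nonsing_inv_mul_cancel_right _ _ hu]
    abel
  rw [e]
  simp only [conjTranspose_add, conjTranspose_mul, conjTranspose_conjTranspose, Matrix.mul_sub,
    Matrix.sub_mul, Matrix.mul_one, Matrix.add_mul, Matrix.mul_add, ← Matrix.mul_assoc]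
  abel

/-- A Cauchy–Schwarz inequality for determinants, with its case of equality. -/
lemma norm_det_sq_le (W X : Matrix m n ℂ) :
    ‖(1 + Wᴴ * X).det‖ ^ 2 ≤ ‖(1 + Wᴴ * W).det‖ * ‖(1 + Xᴴ * X).det‖ ∧
      (‖(1 + Wᴴ * X).det‖ ^ 2 = ‖(1 + Wᴴ * W).det‖ * ‖(1 + Xᴴ * X).det‖ → X = W) := by
  have hP := posDef_one_add W
  have hR := (posDef_one_add' W).inv
  have hp : 0 < ‖(1 + Wᴴ * W).det‖ := norm_pos_iff.2 hP.det_pos.ne'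
  have key := norm_det_le_norm_det_add
    (hP.inv.posSemidef.conjTranspose_mul_mul_same (1 + Wᴴ * X))
    (hR.posSemidef.conjTranspose_mul_mul_same (X - W))
    (by rw [← gram_decomp]; exact posDef_one_add X)
  rw [← gram_decomp] at key
  have hn : ‖(1 + Wᴴ * X).det‖ ^ 2 = ‖(1 + Wᴴ * W).det‖ *
      ‖((1 + Wᴴ * X)ᴴ * (1 + Wᴴ * W)⁻¹ * (1 + Wᴴ * X)).det‖ := by
    rw [det_mul, det_mul, det_conjTranspose, det_nonsing_inv, Ring.inverse_eq_inv', norm_mul,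
      norm_mul, norm_star, norm_inv]
    field_simp
  rw [hn]
  refine ⟨mul_le_mul_of_nonneg_left key.1 hp.le, fun h => ?_⟩
  exact sub_eq_zero.1 (conj_eq_zero hR (key.2 (mul_left_cancel₀ hp.ne' h)))

lemma norm_det_conj_le (X : Matrix n n ℂ) :
    ‖(1 + X.map (starRingEnd ℂ) * X).det‖ ≤ ‖(1 + Xᴴ * X).det‖ ∧
      (‖(1 + X.map (starRingEnd ℂ) * X).det‖ = ‖(1 + Xᴴ * X).det‖ → X = Xᵀ) := by
  have h := norm_det_sq_le Xᵀ X
  have e : X.map (starRingEnd ℂ) = Xᵀᴴ := by ext i j; simp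
  have e2 : (1 + Xᵀᴴ * Xᵀ).det = (1 + Xᴴ * X).det := by
    rw [det_one_add_mul_comm Xᴴ X, ← det_transpose (1 + X * Xᴴ), transpose_add, transpose_one,
      transpose_mul]
    rfl
  rw [e2, ← sq] at h
  rw [e]
  exact ⟨(sq_le_sq₀ (norm_nonneg _) (norm_nonneg _)).1 h.1, fun h' => h.2 (by rw [h'])⟩

lemma det_one_add_fromBlocks (X : Matrix m m ℂ) (Y : Matrix m n ℂ) (Z : Matrix n n ℂ) :
    (1 + (fromBlocks X Y 0 Z)ᴴ * fromBlocks X Y 0 Z).det =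
      (1 + Xᴴ * X).det * (1 + Zᴴ * Z + Yᴴ * (1 + X * Xᴴ)⁻¹ * Y).det := by
  let := (posDef_one_add X).isUnit.invertible
  rw [inv_one_add, fromBlocks_conjTranspose, fromBlocks_multiply, ← fromBlocks_one,
    fromBlocks_add]
  simp only [conjTranspose_zero, Matrix.zero_mul, Matrix.mul_zero, add_zero, zero_add]
  rw [det_fromBlocks₁₁, invOf_eq_nonsing_inv]
  congr 2
  simp only [Matrix.mul_sub, Matrix.sub_mul, Matrix.mul_one, ← Matrix.mul_assoc]
  abel

end Aux

theorem stmt_9 (r s : ℕ) (X : Matrix (Fin r) (Fin r) ℂ) (Y : Matrix (Fin r) (Fin s) ℂ)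
    (Z : Matrix (Fin s) (Fin s) ℂ) (T : Matrix (Fin r ⊕ Fin s) (Fin r ⊕ Fin s) ℂ)
    (hT : T = Matrix.fromBlocks X Y 0 Z) :
    (1 + Tᴴ * T).det =
        (1 + X.map (starRingEnd ℂ) * X).det * (1 + Z.map (starRingEnd ℂ) * Z).det ↔
      Y = 0 ∧ X = Xᵀ ∧ Z = Zᵀ := by
  subst hT
  rw [det_one_add_fromBlocks]
  constructor
  · intro h
    have hR := (posDef_one_add' X).inv
    have hS := hR.posSemidef.conjTranspose_mul_mul_same Y
    have hZ := posDef_one_add Z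
    have hY := norm_det_le_norm_det_add hZ.posSemidef hS (hZ.add_posSemidef hS)
    have hX' := norm_det_conj_le X
    have hZ' := norm_det_conj_le Z
    have ha : 0 < ‖(1 + Xᴴ * X).det‖ := norm_pos_iff.2 (posDef_one_add X).det_pos.ne'
    have hb : 0 < ‖(1 + Zᴴ * Z).det‖ := norm_pos_iff.2 hZ.det_pos.ne'
    have hn := congrArg norm h
    rw [norm_mul, norm_mul] at hn
    have hcx := norm_nonneg (1 + X.map (starRingEnd ℂ) * X).det
    have hcz := norm_nonneg (1 + Z.map (starRingEnd ℂ) * Z).det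
    generalize ‖(1 + Xᴴ * X).det‖ = a at *
    generalize ‖(1 + Zᴴ * Z).det‖ = b at *
    generalize ‖(1 + X.map (starRingEnd ℂ) * X).det‖ = x at *
    generalize ‖(1 + Z.map (starRingEnd ℂ) * Z).det‖ = z at *
    generalize ‖(1 + Zᴴ * Z + Yᴴ * (1 + X * Xᴴ)⁻¹ * Y).det‖ = c at *
    -- Now `x ≤ a`, `z ≤ b ≤ c` and `a * c = x * z`, with `a` and `b` positive.
    obtain ⟨hbc, hY⟩ := hY
    obtain ⟨hxa, hX'⟩ := hX'
    obtain ⟨hzb, hZ'⟩ := hZ'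
    have h1 : x * z ≤ a * z := mul_le_mul_of_nonneg_right hxa hcz
    have hcz' : c ≤ z := le_of_mul_le_mul_left (hn.le.trans h1) ha
    have hbz : z = b := by linarith
    have hbc' : b = c := by linarith
    have hxa' : x = a := by
      apply mul_right_cancel₀ hb.ne'
      rw [← hbz, ← hn, hbz, hbc']
    exact ⟨conj_eq_zero hR (hY hbc'), hX' hxa', hZ' hbz⟩
  · rintro ⟨rfl, hX, hZ⟩
    have e : ∀ {k : ℕ} (A : Matrix (Fin k) (Fin k) ℂ), A = Aᵀ →
        A.map (starRingEnd ℂ) = Aᴴ := by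
      intro k A hA
      conv_rhs => rw [hA]
      ext i j
      simp
    rw [e X hX, e Z hZ]
    simp
end

section
/- Let T = [[X, Y], [0, Z]] be an n×n complex block upper triangular matrix with X of size r×r and Z of size (n−r)×(n−r), and let p ≥ 1. Then det(I_n + |T|^p) = det(I_r + |X|^p) · det(I_{n−r} + |Z|^p) if and only if Y = 0. -/
/-!
Write `bᵢ` for the eigenvalues of `TᴴT` and `aᵢ` for those of `XᴴX` and `ZᴴZ` together. The
determinant identity reads `∏ (1 + aᵢ ^ (p/2)) = ∏ (1 + bᵢ ^ (p/2))`.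

The main inequality is `∏ max (aᵢ, c) ≤ ∏ max (bᵢ, c)` for every `c > 0`
(`prod_max_fromBlocks`), a threshold form of Weyl's majorant theorem. Let `B = max (TᴴT, c)`, so
that `B ≥ TᴴT`, `B ≥ c` and `det B = ∏ max (bᵢ, c)`. Then `det B` is the determinant of the leading
block, which is at least `XᴴX` and at least `c`, times that of the Schur complement
`[w; 1]ᴴ B [w; 1]`, which is at least `(Xw + Y)ᴴ(Xw + Y) + ZᴴZ` and at least `c`. Both factors are
bounded below by `prod_max_le_det`: `B ≥ A` and `B ≥ c` imply `det B ≥ det (max (A, c))`.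

Given this domination at all thresholds, `∑ G aᵢ ≤ ∑ G bᵢ` for every `G` with `c * G' c`
nondecreasing (`sum_le_sum_of_log_max`), because
`∑ G bᵢ - ∑ G aᵢ` is an integral over `c` of the threshold differences against the derivative of
`c * G' c`. For `G x = log (1 + x ^ (p/2))` that derivative is positive, so equality forces the
threshold sums to coincide for every `c`. Taking `G x = x` then yields `∑ aᵢ = ∑ bᵢ`, that is,
`tr (YᴴY) = 0`, hence `Y = 0`. Conversely, if `Y = 0` then the characteristic polynomial of `TᴴT`
factors, so the `bᵢ` are the `aᵢ`.
-/

open Matrix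
open scoped ComplexOrder

/-- `|A|^p`: the `p`-th power (spectral functional calculus) of the positive semidefinite
absolute value `|A| = (AᴴA)^{1/2}` of a square complex matrix `A`. -/
noncomputable def absPow {n : Type*} [Fintype n] [DecidableEq n]
    (A : Matrix n n ℂ) (p : ℝ) : Matrix n n ℂ :=
  (Matrix.posSemidef_conjTranspose_mul_self A).1.cfc (fun x => Real.sqrt x ^ p)

/-! ### Threshold sums and convexity in logarithmic scale -/

section Layer
open Filter Topology Set

/-- The layer function `c ↦ G (max x c) - k c * log (max x c)` of a point `x` has derivative
`-k' c * log (max x c)` when `k c = c * G' c`; the one-sided derivatives at `c = x` agree. -/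
lemma layer_hasDerivAt {G k k' : ℝ → ℝ} (hG : ∀ c, 0 < c → HasDerivAt G (k c / c) c)
    (hk : ∀ c, 0 < c → HasDerivAt k (k' c) c) (x c : ℝ) (hc : 0 < c) :
    HasDerivAt (fun c => G (max x c) - k c * Real.log (max x c))
      (-(k' c * Real.log (max x c))) c := by
  have left : ∀ L, L = Real.log x → HasDerivAt (fun c => G x - k c * Real.log x) (-(k' c * L)) c := by
    rintro _ rfl
    exact (((hk c hc).mul_const _).const_sub _)
  have right : HasDerivAt (fun c => G c - k c * Real.log c) (-(k' c * Real.log c)) c := by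
    refine ((hG c hc).fun_sub ((hk c hc).fun_mul (Real.hasDerivAt_log hc.ne'))).congr_deriv ?_
    rw [div_eq_mul_inv]
    ring
  rcases lt_trichotomy c x with h | h | h
  · refine (left _ (by rw [max_eq_left h.le])).congr_of_eventuallyEq ?_
    filter_upwards [eventually_lt_nhds h] with y hy
    simp [max_eq_left hy.le]
  · subst h
    rw [max_self, ← hasDerivWithinAt_univ, ← Iic_union_Ici (a := c)]
    refine HasDerivWithinAt.union ?_ ?_
    · refine (left _ rfl).hasDerivWithinAt.congr (fun y hy => ?_) (by simp)
      simp [max_eq_left hy.out]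
    · refine right.hasDerivWithinAt.congr (fun y hy => ?_) (by simp)
      simp [max_eq_right hy.out]
  · rw [max_eq_right h.le]
    refine right.congr_of_eventuallyEq ?_
    filter_upwards [eventually_gt_nhds h] with y hy
    simp [max_eq_right hy.le]

lemma layer_tendsto {G k : ℝ → ℝ} (hG0 : Tendsto G (𝓝[>] 0) (𝓝 (G 0)))
    (hk0 : Tendsto k (𝓝[>] 0) (𝓝 0))
    (hkl : Tendsto (fun c => k c * Real.log c) (𝓝[>] 0) (𝓝 0)) (x : ℝ) (hx : 0 ≤ x) :
    Tendsto (fun c => G (max x c) - k c * Real.log (max x c)) (𝓝[>] 0) (𝓝 (G x)) := by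
  rcases hx.eq_or_lt with rfl | hx
  · have := hG0.sub hkl
    rw [sub_zero] at this
    refine this.congr' ?_
    filter_upwards [self_mem_nhdsWithin] with c hc
    rw [max_eq_right (le_of_lt hc.out)]
  · have : Tendsto (fun c => G x - k c * Real.log x) (𝓝[>] 0) (𝓝 (G x - 0 * Real.log x)) :=
      tendsto_const_nhds.sub (hk0.mul_const _)
    rw [zero_mul, sub_zero] at this
    refine this.congr' ?_
    filter_upwards [nhdsWithin_le_nhds (eventually_lt_nhds hx)] with c hc
    rw [max_eq_left hc.le]

/-- A Karamata-type comparison in logarithmic scale. If `∑ log (max aᵢ c) ≤ ∑ log (max bᵢ c)` for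
every `c > 0`, then `∑ G aᵢ ≤ ∑ G bᵢ` whenever `k c = c * G' c` is nondecreasing (that is, `G ∘ exp`
is convex). Equality forces the threshold sums to agree at every `c` with `k' c ≠ 0`. -/
lemma sum_le_sum_of_log_max {ι : Type*} [Fintype ι] {a b : ι → ℝ} (ha : ∀ i, 0 ≤ a i)
    (hb : ∀ i, 0 ≤ b i)
    (hab : ∀ c, 0 < c → ∑ i, Real.log (max (a i) c) ≤ ∑ i, Real.log (max (b i) c))
    {G k k' : ℝ → ℝ} (hG : ∀ c, 0 < c → HasDerivAt G (k c / c) c)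
    (hk : ∀ c, 0 < c → HasDerivAt k (k' c) c) (hk' : ∀ c, 0 < c → 0 ≤ k' c)
    (hG0 : Tendsto G (𝓝[>] 0) (𝓝 (G 0)))
    (hk0 : Tendsto k (𝓝[>] 0) (𝓝 0))
    (hkl : Tendsto (fun c => k c * Real.log c) (𝓝[>] 0) (𝓝 0)) :
    ∑ i, G (a i) ≤ ∑ i, G (b i) ∧
      (∑ i, G (a i) = ∑ i, G (b i) → ∀ c, 0 < c →
        k' c * (∑ i, Real.log (max (b i) c) - ∑ i, Real.log (max (a i) c)) = 0) := by
  set D : ℝ → ℝ := fun c => ∑ i, (G (max (b i) c) - k c * Real.log (max (b i) c)) -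
    ∑ i, (G (max (a i) c) - k c * Real.log (max (a i) c)) with hD
  have hder : ∀ c, 0 < c → HasDerivAt D
      (-(k' c * (∑ i, Real.log (max (b i) c) - ∑ i, Real.log (max (a i) c)))) c := by
    intro c hc
    refine ((HasDerivAt.fun_sum (u := Finset.univ)
      (fun i _ => layer_hasDerivAt hG hk (b i) c hc)).fun_sub
      (HasDerivAt.fun_sum (u := Finset.univ)
      (fun i _ => layer_hasDerivAt hG hk (a i) c hc))).congr_deriv ?_
    simp only [Finset.sum_neg_distrib, ← Finset.mul_sum]
    ring
  have hanti : AntitoneOn D (Ioi 0) := by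
    refine antitoneOn_of_deriv_nonpos (convex_Ioi 0)
      (fun c hc => (hder c hc).continuousAt.continuousWithinAt) ?_ ?_
    · intro c hc
      rw [interior_Ioi] at hc
      exact (hder c hc).differentiableAt.differentiableWithinAt
    · intro c hc
      rw [interior_Ioi] at hc
      rw [(hder c hc).deriv, neg_nonpos]
      exact mul_nonneg (hk' c hc) (sub_nonneg.2 (hab c hc))
  have hlim : Tendsto D (𝓝[>] 0) (𝓝 (∑ i, G (b i) - ∑ i, G (a i))) :=
    (tendsto_finsetSum _ fun i _ => layer_tendsto hG0 hk0 hkl (b i) (hb i)).sub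
      (tendsto_finsetSum _ fun i _ => layer_tendsto hG0 hk0 hkl (a i) (ha i))
  -- Above all the `aᵢ` and `bᵢ` every summand is `G c - k c * log c`, so the two sums cancel.
  have hnonneg : ∀ c, 0 < c → 0 ≤ D c := by
    intro c hc
    set M := c + ∑ i, a i + ∑ i, b i with hM
    have hsa : 0 ≤ ∑ i, a i := Finset.sum_nonneg fun i _ => ha i
    have hsb : 0 ≤ ∑ i, b i := Finset.sum_nonneg fun i _ => hb i
    have h1 : ∀ i, max (a i) M = M := fun i => max_eq_right (by
      have := Finset.single_le_sum (fun i _ => ha i) (Finset.mem_univ i)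
      linarith)
    have h2 : ∀ i, max (b i) M = M := fun i => max_eq_right (by
      have := Finset.single_le_sum (fun i _ => hb i) (Finset.mem_univ i)
      linarith)
    have : D M = 0 := by simp [hD, h1, h2]
    rw [← this]
    exact hanti hc (show 0 < M by linarith) (by linarith)
  have hmem : ∀ᶠ c : ℝ in 𝓝[>] 0, 0 < c := self_mem_nhdsWithin
  refine ⟨sub_nonneg.1 (ge_of_tendsto hlim (hmem.mono hnonneg)), fun heq => ?_⟩
  rw [heq, sub_self] at hlim
  have hzero : ∀ c, 0 < c → D c = 0 := by
    intro c hc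
    refine le_antisymm (ge_of_tendsto hlim ?_) (hnonneg c hc)
    filter_upwards [hmem, nhdsWithin_le_nhds (eventually_lt_nhds hc)] with e he hec
    exact hanti he hc hec.le
  intro c hc
  have h0 : HasDerivAt D 0 c := (hasDerivAt_const c (0 : ℝ)).congr_of_eventuallyEq (by
    filter_upwards [eventually_gt_nhds hc] with e he using hzero e he)
  exact neg_eq_zero.1 ((hder c hc).unique h0)

/-- If `a` is dominated by `b` at every threshold and `∑ log (1 + aᵢ ^ q) = ∑ log (1 + bᵢ ^ q)`,
then `∑ aᵢ = ∑ bᵢ`: the threshold sums coincide, and they determine every such sum. -/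
lemma sum_eq_sum_of_log_max {ι : Type*} [Fintype ι] {a b : ι → ℝ} (ha : ∀ i, 0 ≤ a i)
    (hb : ∀ i, 0 ≤ b i)
    (hab : ∀ c, 0 < c → ∑ i, Real.log (max (a i) c) ≤ ∑ i, Real.log (max (b i) c))
    {q : ℝ} (hq : 0 < q)
    (h : ∑ i, Real.log (1 + a i ^ q) = ∑ i, Real.log (1 + b i ^ q)) :
    ∑ i, a i = ∑ i, b i := by
  have hpow : Tendsto (fun c : ℝ => c ^ q) (𝓝[>] 0) (𝓝 0) := by
    have := (Real.continuousAt_rpow_const 0 q (Or.inr hq.le)).tendsto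
    rw [Real.zero_rpow hq.ne'] at this
    exact this.mono_left nhdsWithin_le_nhds
  have hinv : Tendsto (fun c : ℝ => q / (1 + c ^ q)) (𝓝[>] 0) (𝓝 (q / (1 + 0))) :=
    tendsto_const_nhds.div (tendsto_const_nhds.add hpow) (by norm_num)
  have hpos : ∀ c : ℝ, 0 < c → 0 < 1 + c ^ q := fun c hc => by positivity
  have hd : ∀ c : ℝ, 0 < c → HasDerivAt (fun c : ℝ => c ^ q) (q * c ^ q / c) c := by
    intro c hc
    convert Real.hasDerivAt_rpow_const (p := q) (Or.inl hc.ne') using 1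
    rw [Real.rpow_sub_one hc.ne']
    ring
  have key := (sum_le_sum_of_log_max ha hb hab (G := fun c => Real.log (1 + c ^ q))
    (k := fun c => q / (1 + c ^ q) * c ^ q) (k' := fun c => q ^ 2 * c ^ q / (c * (1 + c ^ q) ^ 2))
    (by
      intro c hc
      refine (((hd c hc).const_add 1).log (hpos c hc).ne').congr_deriv ?_
      have := hpos c hc
      field_simp)
    (by
      intro c hc
      have := hpos c hc
      refine (((hasDerivAt_const c q).fun_div ((hd c hc).const_add 1) this.ne').fun_mul
        (hd c hc)).congr_deriv ?_
      field_simp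
      ring)
    (fun c hc => by have := hpos c hc; positivity)
    (by
      have := (tendsto_const_nhds (x := (1 : ℝ))).add hpow
      simp only [Real.zero_rpow hq.ne']
      exact (this.log (by norm_num)))
    (by simpa using hinv.mul hpow)
    (by
      have := hinv.mul (tendsto_log_mul_rpow_nhdsGT_zero hq)
      rw [mul_zero] at this
      exact this.congr fun c => by ring)).2 h
  have hF : ∀ c, 0 < c → ∑ i, Real.log (max (b i) c) = ∑ i, Real.log (max (a i) c) := by
    intro c hc
    have h1 := hpos c hc
    have h2 : q ^ 2 * c ^ q / (c * (1 + c ^ q) ^ 2) ≠ 0 := by positivity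
    exact sub_eq_zero.1 ((mul_eq_zero.1 (key c hc)).resolve_left h2)
  have lin : ∀ {a b : ι → ℝ}, (∀ i, 0 ≤ a i) → (∀ i, 0 ≤ b i) →
      (∀ c, 0 < c → ∑ i, Real.log (max (a i) c) ≤ ∑ i, Real.log (max (b i) c)) →
      ∑ i, a i ≤ ∑ i, b i := by
    intro a b ha hb hab
    have hid : Tendsto (fun c : ℝ => c) (𝓝[>] 0) (𝓝 0) := tendsto_id.mono_left nhdsWithin_le_nhds
    refine (sum_le_sum_of_log_max ha hb hab (G := fun c => c) (k := fun c => c)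
      (k' := fun _ => 1) ?_ (fun c _ => hasDerivAt_id c) (fun _ _ => zero_le_one) hid hid ?_).1
    · intro c hc
      rw [div_self hc.ne']
      exact hasDerivAt_id c
    · refine (tendsto_log_mul_rpow_nhdsGT_zero zero_lt_one).congr fun c => ?_
      rw [Real.rpow_one, mul_comm]
  exact le_antisymm (lin ha hb fun c hc => (hF c hc).ge) (lin hb ha fun c hc => (hF c hc).le)

end Layer

/-! ### Determinants of matrices bounded below -/

section Spectral
variable {n : Type*} [Fintype n] [DecidableEq n] {A : Matrix n n ℂ} (hA : A.IsHermitian)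

lemma herm_cfc_eq_mul (f : ℝ → ℝ) : hA.cfc f = (hA.eigenvectorUnitary : Matrix n n ℂ) *
    diagonal (fun i => (f (hA.eigenvalues i) : ℂ)) * (hA.eigenvectorUnitary : Matrix n n ℂ)ᴴ := by
  rw [Matrix.IsHermitian.cfc, Unitary.conjStarAlgAut_apply]
  rfl

lemma herm_cfc_self : hA.cfc (fun x => x) = A := hA.spectral_theorem.symm

lemma herm_cfc_one : hA.cfc (fun _ => 1) = 1 := by
  simp [Matrix.IsHermitian.cfc, Function.comp_def]

lemma herm_cfc_smul_one (c : ℝ) : hA.cfc (fun _ => c) = (c : ℂ) • 1 := by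
  rw [herm_cfc_eq_mul, ← smul_one_eq_diagonal]
  simp [← star_eq_conjTranspose]

lemma herm_cfc_add (f g : ℝ → ℝ) : hA.cfc f + hA.cfc g = hA.cfc (fun x => f x + g x) := by
  rw [Matrix.IsHermitian.cfc, Matrix.IsHermitian.cfc, Matrix.IsHermitian.cfc, ← map_add,
    diagonal_add]
  simp [Function.comp_def]

lemma herm_cfc_sub (f g : ℝ → ℝ) : hA.cfc f - hA.cfc g = hA.cfc (fun x => f x - g x) := by
  rw [Matrix.IsHermitian.cfc, Matrix.IsHermitian.cfc, Matrix.IsHermitian.cfc, ← map_sub,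
    diagonal_sub]
  simp [Function.comp_def]

lemma det_herm_cfc (f : ℝ → ℝ) : (hA.cfc f).det = ∏ i, (f (hA.eigenvalues i) : ℂ) := by
  rw [herm_cfc_eq_mul, det_mul_right_comm, ← star_eq_conjTranspose]
  simp

lemma posSemidef_herm_cfc (f : ℝ → ℝ) (hf : ∀ x, 0 ≤ f x) : (hA.cfc f).PosSemidef := by
  rw [herm_cfc_eq_mul]
  refine PosSemidef.mul_mul_conjTranspose_same (PosSemidef.diagonal fun i => ?_) _
  simpa using hf _

lemma det_one_add_absPow (A : Matrix n n ℂ) (p : ℝ) :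
    (1 + absPow A p).det = ((∏ i, (1 +
      (posSemidef_conjTranspose_mul_self A).1.eigenvalues i ^ (p / 2)) : ℝ) : ℂ) := by
  rw [absPow, ← herm_cfc_one (posSemidef_conjTranspose_mul_self A).1, herm_cfc_add, det_herm_cfc]
  rw [Complex.ofReal_prod]
  refine Finset.prod_congr rfl fun i _ => ?_
  rw [Real.sqrt_eq_rpow,
    ← Real.rpow_mul ((posSemidef_conjTranspose_mul_self A).eigenvalues_nonneg i)]
  push_cast
  ring_nf

lemma one_le_det_one_add {P : Matrix n n ℂ} (hP : P.PosSemidef) : 1 ≤ (1 + P).det := by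
  nth_rw 1 [← herm_cfc_self hP.1, ← herm_cfc_one hP.1]
  rw [herm_cfc_add, det_herm_cfc]
  have : (1 : ℝ) ≤ ∏ i, (1 + hP.1.eigenvalues i) :=
    Finset.one_le_prod fun i _ => le_add_of_nonneg_right (hP.eigenvalues_nonneg i)
  exact_mod_cast this

/-- Monotonicity of the determinant above a positive diagonal matrix. -/
lemma prod_le_det {d : n → ℝ} (hd : ∀ i, 0 < d i) {B : Matrix n n ℂ}
    (h : (B - diagonal (fun i => (d i : ℂ))).PosSemidef) : ((∏ i, d i : ℝ) : ℂ) ≤ B.det := by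
  set s : Matrix n n ℂ := diagonal fun i => ((√(d i) : ℝ) : ℂ) with hs
  set t : Matrix n n ℂ := diagonal fun i => (((√(d i))⁻¹ : ℝ) : ℂ) with ht
  have hne : ∀ i, ((√(d i) : ℝ) : ℂ) ≠ 0 := fun i => by
    exact_mod_cast (Real.sqrt_pos.2 (hd i)).ne'
  have htt : tᴴ = t := by
    rw [ht, diagonal_conjTranspose]; congr 1; ext i; simp
  have hst : s * t = 1 := by simp [hs, ht, hne]
  have hts : t * s = 1 := by simp [hs, ht, hne]
  have hss : s * s = diagonal (fun i => (d i : ℂ)) := by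
    rw [hs, diagonal_mul_diagonal]; congr 1; ext i
    exact_mod_cast Real.mul_self_sqrt (hd i).le
  have hP := h.conjTranspose_mul_mul_same t
  rw [htt] at hP
  have hB : B = s * (1 + t * (B - diagonal (fun i => (d i : ℂ))) * t) * s := by
    have : s * (1 + t * (B - diagonal (fun i => (d i : ℂ))) * t) * s =
      s * s + (s * t) * (B - diagonal (fun i => (d i : ℂ))) * (t * s) := by noncomm_ring
    rw [this, hst, hts, hss]; simp
  have hdet : B.det = ((∏ i, d i : ℝ) : ℂ) *
      (1 + t * (B - diagonal (fun i => (d i : ℂ))) * t).det := by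
    conv_lhs => rw [hB]
    rw [det_mul, det_mul, mul_right_comm, ← det_mul, hss]
    simp
  rw [hdet]
  refine le_mul_of_one_le_right ?_ (one_le_det_one_add hP)
  exact_mod_cast Finset.prod_nonneg fun i _ => (hd i).le

/-- The block column `[w; 1]`, whose range is the graph of `w`. -/
def graphRows {m n : Type*} [DecidableEq n] (w : Matrix m n ℂ) : Matrix (m ⊕ n) n ℂ :=
  fromRows w 1

lemma graphRows_conjTranspose {m n : Type*} [DecidableEq n] (w : Matrix m n ℂ) :
    (graphRows w)ᴴ = fromCols wᴴ 1 := by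
  rw [graphRows, conjTranspose_fromRows_eq_fromCols_conjTranspose, conjTranspose_one]

/-- The Schur complement of the leading block of `B` is a compression `[w; 1]ᴴ B [w; 1]`. -/
lemma exists_schur {m n : Type*} [Fintype m] [DecidableEq m] [Fintype n] [DecidableEq n]
    {B : Matrix (m ⊕ n) (m ⊕ n) ℂ} (hB : B.PosDef) : ∃ w : Matrix m n ℂ,
    B.det = B.toBlocks₁₁.det * ((graphRows w)ᴴ * B * graphRows w).det := by
  obtain ⟨P, Q, R, S, rfl⟩ : ∃ P Q R S, B = fromBlocks P Q R S :=
    ⟨_, _, _, _, (fromBlocks_toBlocks B).symm⟩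
  have h11 : P.PosDef := hB.submatrix Sum.inl_injective
  have := h11.isUnit.invertible
  refine ⟨-(P⁻¹ * Q), ?_⟩
  have hW : (graphRows (-(P⁻¹ * Q)))ᴴ * fromBlocks P Q R S * graphRows (-(P⁻¹ * Q)) =
      S - R * P⁻¹ * Q := by
    rw [graphRows_conjTranspose, graphRows, Matrix.mul_assoc,
      fromBlocks_mul_fromRows, fromCols_mul_fromRows]
    simp [Matrix.mul_assoc, sub_eq_neg_add]
  rw [hW, det_fromBlocks₁₁, invOf_eq_nonsing_inv, toBlocks_fromBlocks₁₁]

lemma posDef_of_sub {l : Type*} [DecidableEq l] {c : ℝ} (hc : 0 < c) {B : Matrix l l ℂ}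
    (h : (B - (c : ℂ) • 1).PosSemidef) : B.PosDef := by
  have : ((c : ℂ) • (1 : Matrix l l ℂ)).PosDef := PosDef.one.smul (by exact_mod_cast hc)
  simpa using this.posSemidef_add h

/-- Compressing `B ≥ c` by `[w; 1]` gives a matrix that is still `≥ c`, since
`[w; 1]ᴴ [w; 1] = wᴴ w + 1`. -/
lemma schur_ge {m n : Type*} [Fintype m] [DecidableEq m] [Fintype n] [DecidableEq n]
    {B : Matrix (m ⊕ n) (m ⊕ n) ℂ} {c : ℝ} (hc : 0 < c) (h : (B - (c : ℂ) • 1).PosSemidef)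
    (w : Matrix m n ℂ) :
    ((graphRows w)ᴴ * B * graphRows w - (c : ℂ) • 1).PosSemidef := by
  have h1 := h.conjTranspose_mul_mul_same (graphRows w)
  have h2 : ((c : ℂ) • (wᴴ * w)).PosSemidef :=
    (posSemidef_conjTranspose_mul_self w).smul (by exact_mod_cast hc.le)
  convert h1.add h2 using 1
  have h3 : (graphRows w)ᴴ * graphRows w = wᴴ * w + 1 := by
    rw [graphRows_conjTranspose, graphRows, fromCols_mul_fromRows]
    simp
  rw [Matrix.mul_sub, Matrix.sub_mul]
  rw [Matrix.mul_smul, Matrix.smul_mul, Matrix.mul_one, h3, smul_add]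
  abel

/-- If `B ≥ diag d` and `B ≥ c > 0`, then `det B ≥ ∏ max (dᵢ, c)`. Splitting the indices at
`c < dᵢ`, the first diagonal block of `B` lies above `diag d`, and its Schur complement
lies above `c`. -/
lemma prod_max_le_det_diagonal {d : n → ℝ} {c : ℝ} (hc : 0 < c) {B : Matrix n n ℂ}
    (h : (B - diagonal (fun i => (d i : ℂ))).PosSemidef) (h' : (B - (c : ℂ) • 1).PosSemidef) :
    ((∏ i, max (d i) c : ℝ) : ℂ) ≤ B.det := by
  classical
  set e := Equiv.sumCompl (fun i => c < d i) with he
  have h1 : (B.submatrix e e - (c : ℂ) • 1).PosSemidef := by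
    simpa [submatrix_sub, submatrix_smul] using h'.submatrix e
  obtain ⟨w, hw⟩ := exists_schur (posDef_of_sub hc h1)
  rw [← det_submatrix_equiv_self e, hw, ← e.prod_comp, Fintype.prod_sum_type]
  push_cast
  have hsub : ((B.submatrix e e).toBlocks₁₁ -
      diagonal (fun i : {i // c < d i} => (d i : ℂ))).PosSemidef := by
    convert h.submatrix (fun i : {i // c < d i} => (i : n)) using 1
    ext i j
    simp [toBlocks₁₁, he, diagonal_apply, Subtype.ext_iff]
  have k1 := prod_le_det (d := fun i : {i // c < d i} => d i) (fun i => hc.trans i.2) hsub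
  have k2 := prod_le_det (d := fun _ : {i // ¬ c < d i} => c) (fun _ => hc)
    (by simpa [smul_one_eq_diagonal] using schur_ge hc h1 w)
  have e1 : ∀ i : {i // c < d i}, max (d (e (Sum.inl i))) c = d i := fun i => by
    simp [he, i.2.le]
  have e2 : ∀ i : {i // ¬ c < d i}, max (d (e (Sum.inr i))) c = c := fun i => by
    simpa [he] using i.2
  simp only [← Complex.ofReal_prod, e1, e2]
  have n1 : (0 : ℂ) ≤ ((∏ i : {i // c < d i}, d i : ℝ) : ℂ) := by
    rw [Complex.zero_le_real]
    exact Finset.prod_nonneg fun i _ => (hc.trans i.prop).le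
  have n2 : (0 : ℂ) ≤ ((∏ i : {i // ¬ c < d i}, c : ℝ) : ℂ) := by
    exact_mod_cast Finset.prod_nonneg fun i _ => hc.le
  exact mul_le_mul k1 k2 n2 (n1.trans k1)

/-- If `B ≥ A` and `B ≥ c > 0`, then `det B ≥ det (max (A, c))`. -/
lemma prod_max_le_det {c : ℝ} (hc : 0 < c) {B : Matrix n n ℂ}
    (h : (B - A).PosSemidef) (h' : (B - (c : ℂ) • 1).PosSemidef) :
    ((∏ i, max (hA.eigenvalues i) c : ℝ) : ℂ) ≤ B.det := by
  set U : Matrix n n ℂ := (hA.eigenvectorUnitary : Matrix n n ℂ) with hU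
  have hUU : Uᴴ * U = 1 := by simp [hU, ← star_eq_conjTranspose]
  have hUU' : U * Uᴴ = 1 := by simp [hU, ← star_eq_conjTranspose]
  have hdet : B.det = (Uᴴ * B * U).det := by
    rw [det_mul_right_comm, hUU, one_mul]
  have hAU : Uᴴ * A * U = diagonal (fun i => (hA.eigenvalues i : ℂ)) := by
    conv_lhs => rw [← herm_cfc_self hA, herm_cfc_eq_mul]
    rw [← hU]
    calc _ = (Uᴴ * U) * diagonal (fun i => (hA.eigenvalues i : ℂ)) * (Uᴴ * U) := by
          simp only [Matrix.mul_assoc]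
      _ = _ := by simp [hUU]
  rw [hdet]
  refine prod_max_le_det_diagonal hc ?_ ?_
  · rw [← hAU]
    simpa [Matrix.mul_sub, Matrix.sub_mul] using h.conjTranspose_mul_mul_same U
  · simpa [Matrix.mul_sub, Matrix.sub_mul, hUU] using h'.conjTranspose_mul_mul_same U

end Spectral

/-! ### Block triangular matrices -/

section Blocks
variable {m n : Type*} [Fintype m] [DecidableEq m] [Fintype n] [DecidableEq n]

/-- The eigenvalues of `AᴴA`, that is, the squared singular values of `A`. -/
noncomputable def sqSing (A : Matrix n n ℂ) : n → ℝ :=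
  (posSemidef_conjTranspose_mul_self A).1.eigenvalues

lemma sqSing_nonneg (A : Matrix n n ℂ) (i : n) : 0 ≤ sqSing A i :=
  (posSemidef_conjTranspose_mul_self A).eigenvalues_nonneg i

lemma sum_sqSing (A : Matrix n n ℂ) : ((∑ i, sqSing A i : ℝ) : ℂ) = (Aᴴ * A).trace := by
  rw [(posSemidef_conjTranspose_mul_self A).1.trace_eq_sum_eigenvalues]
  simp [sqSing]

/-- The truncation `B = max (TᴴT, c)` dominates `TᴴT` and `c`. Its leading block therefore
dominates `XᴴX` and `c`, and its Schur complement dominates `ZᴴZ` and `c`. -/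
lemma prod_max_fromBlocks (X : Matrix m m ℂ) (Y : Matrix m n ℂ) (Z : Matrix n n ℂ) {c : ℝ}
    (hc : 0 < c) :
    (∏ i, max (sqSing X i) c) * ∏ i, max (sqSing Z i) c ≤
      ∏ i, max (sqSing (fromBlocks X Y 0 Z) i) c := by
  set T := fromBlocks X Y 0 Z with hT
  have hTT := (posSemidef_conjTranspose_mul_self T).1
  set B := hTT.cfc (fun x => max x c) with hB
  have hdetB : B.det = ((∏ i, max (sqSing T i) c : ℝ) : ℂ) := by
    rw [hB, det_herm_cfc]; simp [sqSing]
  have hBT : (B - Tᴴ * T).PosSemidef := by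
    have := posSemidef_herm_cfc hTT (fun x => max x c - x) (fun x => by simp)
    rwa [← herm_cfc_sub, herm_cfc_self] at this
  have hBc : (B - (c : ℂ) • 1).PosSemidef := by
    have := posSemidef_herm_cfc hTT (fun x => max x c - c) (fun x => by simp)
    rwa [← herm_cfc_sub hTT (fun x => max x c) (fun _ => c), herm_cfc_smul_one] at this
  obtain ⟨w, hw⟩ := exists_schur (posDef_of_sub hc hBc)
  have k1 : ((∏ i, max (sqSing X i) c : ℝ) : ℂ) ≤ B.toBlocks₁₁.det := by
    refine prod_max_le_det _ hc ?_ ?_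
    · convert hBT.submatrix (Sum.inl : m → m ⊕ n) using 1
      rw [hT, fromBlocks_conjTranspose, fromBlocks_multiply]
      ext i j
      simp [toBlocks₁₁]
    · convert hBc.submatrix (Sum.inl : m → m ⊕ n) using 1
      ext i j
      simp [toBlocks₁₁, one_apply]
  have k2 : ((∏ i, max (sqSing Z i) c : ℝ) : ℂ) ≤
      ((graphRows w)ᴴ * B * graphRows w).det := by
    refine prod_max_le_det _ hc ?_ (schur_ge hc hBc w)
    -- `T [w; 1] = [X w + Y; Z]`, so the compression of `TᴴT` exceeds `ZᴴZ` by a Gram matrix.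
    have hTW : T * graphRows w = fromRows (X * w + Y) Z := by
      rw [hT, graphRows, fromBlocks_mul_fromRows]; simp
    have hgram : (graphRows w)ᴴ * (Tᴴ * T) * graphRows w =
        (X * w + Y)ᴴ * (X * w + Y) + Zᴴ * Z := by
      calc _ = (T * graphRows w)ᴴ * (T * graphRows w) := by
            rw [conjTranspose_mul]; simp only [Matrix.mul_assoc]
        _ = _ := by
            rw [hTW, conjTranspose_fromRows_eq_fromCols_conjTranspose, fromCols_mul_fromRows]
    convert (hBT.conjTranspose_mul_mul_same (graphRows w)).add
      (posSemidef_conjTranspose_mul_self (X * w + Y)) using 1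
    rw [Matrix.mul_sub, Matrix.sub_mul, hgram]
    abel
  have n1 : (0 : ℂ) ≤ ((∏ i, max (sqSing X i) c : ℝ) : ℂ) := by
    exact_mod_cast Finset.prod_nonneg fun i _ => hc.le.trans (le_max_right _ _)
  have n2 : (0 : ℂ) ≤ ((∏ i, max (sqSing Z i) c : ℝ) : ℂ) := by
    exact_mod_cast Finset.prod_nonneg fun i _ => hc.le.trans (le_max_right _ _)
  have := mul_le_mul k1 k2 n2 (n1.trans k1)
  rw [← hw, hdetB] at this
  exact_mod_cast this

/-- For a block diagonal matrix the squared singular values are those of the blocks. -/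
lemma prod_sqSing_fromBlocks (X : Matrix m m ℂ) (Z : Matrix n n ℂ) (f : ℝ → ℝ) :
    ∏ i, f (sqSing (fromBlocks X 0 0 Z) i) = (∏ i, f (sqSing X i)) * ∏ i, f (sqSing Z i) := by
  have hroots :=
    (posSemidef_conjTranspose_mul_self (fromBlocks X 0 0 Z)).1.roots_charpoly_eq_eigenvalues
  have hX := (posSemidef_conjTranspose_mul_self X).1.roots_charpoly_eq_eigenvalues
  have hZ := (posSemidef_conjTranspose_mul_self Z).1.roots_charpoly_eq_eigenvalues
  have hTT : conjTranspose (fromBlocks X 0 0 Z) * fromBlocks X 0 0 Z =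
      fromBlocks (Xᴴ * X) 0 0 (Zᴴ * Z) := by
    rw [fromBlocks_conjTranspose, fromBlocks_multiply]; simp
  have hcp : (conjTranspose (fromBlocks X 0 0 Z) * fromBlocks X 0 0 Z).charpoly.roots =
      (Xᴴ * X).charpoly.roots + (Zᴴ * Z).charpoly.roots := by
    rw [hTT, charpoly_fromBlocks_zero₁₂, Polynomial.roots_mul]
    exact mul_ne_zero (charpoly_monic _).ne_zero (charpoly_monic _).ne_zero
  rw [hroots, hX, hZ] at hcp
  have := congrArg (fun s : Multiset ℂ => (s.map fun z => f z.re).prod) hcp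
  simpa [Multiset.map_map, sqSing] using this

/-- The trace of `TᴴT` exceeds that of its diagonal blocks by the squared Frobenius norm of `Y`. -/
lemma sum_sqSing_fromBlocks (X : Matrix m m ℂ) (Y : Matrix m n ℂ) (Z : Matrix n n ℂ) :
    ((∑ i, sqSing (fromBlocks X Y 0 Z) i : ℝ) : ℂ) =
      ((∑ i, sqSing X i + ∑ i, sqSing Z i : ℝ) : ℂ) + (Yᴴ * Y).trace := by
  rw [Complex.ofReal_add, sum_sqSing, sum_sqSing, sum_sqSing, fromBlocks_conjTranspose,
    fromBlocks_multiply, trace]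
  simp [Fintype.sum_sum_type, trace, Finset.sum_add_distrib]
  ring

end Blocks

theorem stmt_12 (r s : ℕ) (X : Matrix (Fin r) (Fin r) ℂ) (Y : Matrix (Fin r) (Fin s) ℂ)
    (Z : Matrix (Fin s) (Fin s) ℂ) (T : Matrix (Fin r ⊕ Fin s) (Fin r ⊕ Fin s) ℂ)
    (hT : T = Matrix.fromBlocks X Y 0 Z) (p : ℝ) (hp : 1 ≤ p) :
    (1 + absPow T p).det = (1 + absPow X p).det * (1 + absPow Z p).det ↔ Y = 0 := by
  have hdet : (1 + absPow T p).det = (1 + absPow X p).det * (1 + absPow Z p).det ↔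
      ∏ i, (1 + sqSing T i ^ (p / 2)) =
        (∏ i, (1 + sqSing X i ^ (p / 2))) * ∏ i, (1 + sqSing Z i ^ (p / 2)) := by
    rw [det_one_add_absPow, det_one_add_absPow, det_one_add_absPow, ← Complex.ofReal_mul,
      Complex.ofReal_inj]
    rfl
  rw [hdet]
  subst hT
  constructor
  · intro h
    set a : Fin r ⊕ Fin s → ℝ := Sum.elim (sqSing X) (sqSing Z) with ha
    have ha0 : ∀ i, 0 ≤ a i := by
      rintro (i | i)
      exacts [sqSing_nonneg X i, sqSing_nonneg Z i]
    have hb0 := sqSing_nonneg (fromBlocks X Y 0 Z)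
    have hsum : ∑ i, a i = ∑ i, sqSing (fromBlocks X Y 0 Z) i := by
      refine sum_eq_sum_of_log_max ha0 hb0 ?_ (q := p / 2) (by linarith) ?_
      · intro c hc
        have hpos : ∀ x : ℝ, 0 < max x c := fun x => hc.trans_le (le_max_right _ _)
        rw [← Real.log_prod fun i _ => (hpos _).ne', ← Real.log_prod fun i _ => (hpos _).ne']
        refine Real.log_le_log (Finset.prod_pos fun i _ => hpos _) ?_
        rw [Fintype.prod_sum_type]
        exact prod_max_fromBlocks X Y Z hc
      · have hpos : ∀ x : ℝ, 0 ≤ x → 1 + x ^ (p / 2) ≠ 0 := fun x hx => by positivity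
        rw [← Real.log_prod fun i _ => hpos _ (ha0 i), ← Real.log_prod fun i _ => hpos _ (hb0 i),
          h, Fintype.prod_sum_type]
        rfl
    rw [Fintype.sum_sum_type] at hsum
    have htr := sum_sqSing_fromBlocks X Y Z
    rw [← hsum] at htr
    exact trace_conjTranspose_mul_self_eq_zero_iff.1 (left_eq_add.1 htr)
  · rintro rfl
    exact prod_sqSing_fromBlocks X Z fun x => 1 + x ^ (p / 2)
end
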